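/- For every λ > 0 and every θ ∈ ℝ, at least one of the following holds: for all odd k ≥ 1 and all E ∈ ℝ, (∂/∂E) x_k(E, λ, θ) = (∂/∂E) x_k(E, λ, 0), or for all even k ≥ 0 and all E ∈ ℝ, (∂/∂E) x_k(E, λ, θ) = (∂/∂E) x_k(E, λ, 0). -/

import Mathlib

/-- `ω = (√5 - 1)/2`, the inverse of the golden mean. -/
noncomputable def goldenOmega : ℝ := (Real.sqrt 5 - 1) / 2

/-- The Fibonacci potential: `v_θ(n) = 1` if the fractional part of `nω + θ`
lies in `[1 - ω, 1)`, and `0` otherwise. -/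
noncomputable def vTheta (θ : ℝ) (n : ℤ) : ℝ :=
  if Int.fract ((n : ℝ) * goldenOmega + θ) ∈ Set.Ico (1 - goldenOmega) 1 then 1 else 0

/-- The one-step transfer matrix `T(m, E, λ, θ)` with rows
`(E - λ v_θ(m), -1)` and `(1, 0)`. -/
noncomputable def Tmat (lam θ E : ℝ) (m : ℤ) : Matrix (Fin 2) (Fin 2) ℝ :=
  !![E - lam * vTheta θ m, -1; 1, 0]

/-- The transfer matrix over `[1, n]`:
`M(n, E, λ, θ) = T(n, E, λ, θ) ⋯ T(1, E, λ, θ)` (with `M(0) = 1`). -/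
noncomputable def Mmat (lam θ E : ℝ) : ℕ → Matrix (Fin 2) (Fin 2) ℝ
  | 0 => 1
  | n + 1 => Tmat lam θ E ((n : ℤ) + 1) * Mmat lam θ E n

/-- The trace `x_k(E, λ, θ) = tr M(F_k, E, λ, θ)`, where `F_k = Nat.fib (k + 2)`
(the paper's Fibonacci numbers `F_{-1} = F_0 = 1`, `F_k = F_{k-1} + F_{k-2}`). -/
noncomputable def xTrace (lam θ : ℝ) (k : ℕ) (E : ℝ) : ℝ :=
  Matrix.trace (Mmat lam θ E (Nat.fib (k + 2)))

/-- Product of transfer matrices along an arbitrary potential. -/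
noncomputable def PP (lam E : ℝ) (u : ℤ → ℝ) : ℕ → Matrix (Fin 2) (Fin 2) ℝ
  | 0 => 1
  | n + 1 => !![E - lam * u ((n : ℤ) + 1), -1; 1, 0] * PP lam E u n

lemma Mmat_eq_PP (lam θ E : ℝ) (n : ℕ) : Mmat lam θ E n = PP lam E (vTheta θ) n := by
  induction n with
  | zero => rfl
  | succ n ih => simp only [Mmat, PP, ih, Tmat]

lemma PP_congr (lam E : ℝ) (u w : ℤ → ℝ) (n : ℕ)
    (h : ∀ m : ℤ, 1 ≤ m → m ≤ n → u m = w m) : PP lam E u n = PP lam E w n := by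
  induction n with
  | zero => rfl
  | succ n ih =>
    simp only [PP]
    rw [ih (fun m h1 h2 => h m h1 (by push_cast; omega)), h _ (by omega) (by push_cast; omega)]

lemma PP_shift (lam E : ℝ) (u : ℤ → ℝ) (n : ℕ) :
    PP lam E u (n + 1) = PP lam E (fun m => u (m + 1)) n * !![E - lam * u 1, -1; 1, 0] := by
  induction n with
  | zero => simp [PP]
  | succ n ih =>
    rw [PP, ih, PP, Matrix.mul_assoc]
    push_cast
    rfl

lemma PP_trace_shift (lam E : ℝ) (u : ℤ → ℝ) (q : ℕ) (h : u (q + 1) = u 1) :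
    Matrix.trace (PP lam E (fun m => u (m + 1)) q) = Matrix.trace (PP lam E u q) := by
  cases q with
  | zero => rfl
  | succ n =>
    rw [PP_shift lam E u n, Matrix.trace_mul_comm, PP]
    push_cast at h
    simp only [h]

/-- Periodic (rational) Sturmian word. -/
noncomputable def WW (p q j : ℤ) (n : ℤ) : ℝ :=
  ((((n + 1) * p + j) / q - (n * p + j) / q : ℤ) : ℝ)

lemma WW_trace_const (lam E : ℝ) (p q : ℕ) (hq : 0 < q) (hpq : Nat.Coprime p q) (i j : ℤ) :
    Matrix.trace (PP lam E (WW p q i) q) = Matrix.trace (PP lam E (WW p q j) q) := by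
  have hq0 : (q : ℤ) ≠ 0 := by positivity
  set τ : ℤ → ℝ := fun j => Matrix.trace (PP lam E (WW p q j) q) with hτ
  have hper1 : Function.Periodic τ (p : ℤ) := by
    intro j
    have h1 : WW p q (j + p) = fun m => WW p q j (m + 1) := by
      funext m
      simp only [WW]
      congr 3 <;> ring
    simp only [hτ]
    rw [h1]
    apply PP_trace_shift
    simp only [WW]
    have e1 : ((q : ℤ) + 1 + 1) * p + j = ((1 + 1) * p + j) + p * q := by ring
    have e2 : ((q : ℤ) + 1) * p + j = (1 * p + j) + p * q := by ring
    rw [e1, e2, Int.add_mul_ediv_right _ _ hq0, Int.add_mul_ediv_right _ _ hq0]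
    congr 1; ring
  have hper2 : Function.Periodic τ (q : ℤ) := by
    intro j
    have h1 : WW p q (j + q) = WW p q j := by
      funext m
      simp only [WW]
      rw [← add_assoc, ← add_assoc, Int.add_ediv_of_dvd_right (dvd_refl _), Int.add_ediv_of_dvd_right (dvd_refl _)]
      congr 1; ring
    simp only [hτ]
    rw [h1]
  obtain ⟨a, b, hab⟩ : IsCoprime (p : ℤ) (q : ℤ) := Nat.isCoprime_iff_coprime.2 hpq
  have h1 : Function.Periodic τ 1 := by
    rw [← hab]
    exact (hper1.int_mul a).add_period (hper2.int_mul b)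
  have hz : ∀ j, τ j = τ 0 := fun j => by
    have := (h1.int_mul j) 0
    simpa using this
  exact (hz i).trans (hz j).symm

lemma om_sq : goldenOmega ^ 2 = 1 - goldenOmega := by
  have := Real.sq_sqrt (show (0 : ℝ) ≤ 5 by norm_num)
  unfold goldenOmega
  linarith

lemma om_lb : 3 / 5 < goldenOmega := by
  have : (2.2 : ℝ) < Real.sqrt 5 := Real.lt_sqrt_of_sq_lt (by norm_num)
  unfold goldenOmega
  linarith

lemma om_ub : goldenOmega < 1 := by
  have : Real.sqrt 5 < 3 := by rw [Real.sqrt_lt' (by norm_num)]; norm_num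
  unfold goldenOmega
  linarith

lemma vTheta_eq (θ : ℝ) (n : ℤ) :
    vTheta θ n = ((⌊((n + 1 : ℤ) : ℝ) * goldenOmega + θ⌋ - ⌊(n : ℝ) * goldenOmega + θ⌋ : ℤ) : ℝ) := by
  have h0 := om_lb
  have h1 := om_ub
  set x := (n : ℝ) * goldenOmega + θ with hx
  have e : ((n + 1 : ℤ) : ℝ) * goldenOmega + θ = x + goldenOmega := by rw [hx]; push_cast; ring
  rw [e]
  have hf := Int.floor_add_fract x
  have f0 := Int.fract_nonneg x
  have f1 := Int.fract_lt_one x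
  unfold vTheta
  rw [← hx]
  split_ifs with h
  · have : ⌊x + goldenOmega⌋ = ⌊x⌋ + 1 := by
      rw [Int.floor_eq_iff]; push_cast
      constructor <;> linarith [h.1]
    rw [this]; push_cast; ring
  · have h2 : Int.fract x < 1 - goldenOmega := by
      by_contra hc
      exact h ⟨not_lt.1 hc, f1⟩
    have : ⌊x + goldenOmega⌋ = ⌊x⌋ := by
      rw [Int.floor_eq_iff]
      constructor <;> linarith
    rw [this]; simp

lemma fib_delta (k : ℕ) : (Nat.fib (k + 2) : ℝ) * goldenOmega - Nat.fib (k + 1)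
    = (-1) ^ (k + 1) * goldenOmega ^ (k + 2) := by
  have hs := om_sq
  induction k using Nat.twoStepInduction with
  | zero => simp [hs]
  | one => 
    have : (Nat.fib 3) = 2 := rfl
    simp [this]
    linear_combination (-goldenOmega + 1) * hs
  | more k h1 h2 =>
    have a := Nat.fib_add_two (n := k + 2)
    have b := Nat.fib_add_two (n := k + 1)
    simp only [add_assoc] at *
    norm_num at *
    rw [a, b]
    rw [b] at h2
    push_cast at *
    simp only [pow_succ] at *
    linear_combination h1 + h2 + (-1) ^ k * goldenOmega ^ k * goldenOmega * goldenOmega * hs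

lemma fib_unit (n : ℕ) :
    goldenOmega ^ n * (Nat.fib (n + 1) + goldenOmega * Nat.fib n) = 1 := by
  have hs := om_sq
  induction n with
  | zero => simp
  | succ n ih =>
    rw [Nat.fib_add_two]
    push_cast
    rw [pow_succ]
    linear_combination ih + goldenOmega ^ n * (Nat.fib (n + 1)) * hs

lemma exists_j (θ : ℝ) (p q : ℕ) (hq : 0 < q) (hpq : Nat.Coprime p q)
    (hd1 : (q : ℝ) * ((q : ℝ) * goldenOmega - p) < 1)
    (hd2 : -1 < (q : ℝ) * ((q : ℝ) * goldenOmega - p))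
    (hG : ⌊((q + 1 : ℤ) : ℝ) * goldenOmega + θ⌋ = ⌊((1 : ℤ) : ℝ) * goldenOmega + θ⌋ + p) :
    ∃ j : ℤ, ∀ n : ℤ, 1 ≤ n → n ≤ q + 1 →
      ⌊(n : ℝ) * goldenOmega + θ⌋ = (n * p + j) / q := by
  set G : ℤ → ℤ := fun n => ⌊(n : ℝ) * goldenOmega + θ⌋ with hGdef
  have hqz : (0 : ℤ) < q := by exact_mod_cast hq
  have hqr : (0 : ℝ) < q := by exact_mod_cast hq
  have key : ∀ n m : ℤ, 1 ≤ n → n ≤ q + 1 → 1 ≤ m → m ≤ q + 1 →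
      G n * q - n * p < G m * q + q - m * p := by
    intro n m hn1 hn2 hm1 hm2
    have hn := Int.floor_le ((n : ℝ) * goldenOmega + θ)
    have hm := Int.lt_floor_add_one ((m : ℝ) * goldenOmega + θ)
    have hdub : ((n : ℝ) - m) ≤ q := by
      have : n - m ≤ q := by omega
      exact_mod_cast this
    have hdlb : -(q : ℝ) ≤ ((n : ℝ) - m) := by
      have : -(q : ℤ) ≤ n - m := by omega
      exact_mod_cast this
    set δ := (q : ℝ) * goldenOmega - p with hδ
    have hdd : ((n : ℝ) - m) * δ < 1 := by
      rcases le_total 0 δ with h | h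
      · nlinarith
      · nlinarith
    have hlt : ((G n : ℝ) - G m - 1) * q < ((n : ℝ) - m) * p + 1 := by
      have h3 : (G n : ℝ) - G m - 1 < ((n : ℝ) - m) * goldenOmega := by
        simp only [hGdef]; linarith
      have h4 := mul_lt_mul_of_pos_right h3 hqr
      have h5 : ((n : ℝ) - m) * goldenOmega * q = ((n : ℝ) - m) * p + ((n : ℝ) - m) * δ := by
        rw [hδ]; ring
      linarith
    have hlt' : (G n - G m - 1) * q < (n - m) * p + 1 := by exact_mod_cast hlt
    by_contra hc
    have heq : (n - m) * p = (G n - G m - 1) * q := by nlinarith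
    have hdvd : (q : ℤ) ∣ (n - m) := by
      have hcop : IsCoprime (q : ℤ) (p : ℤ) := (Nat.isCoprime_iff_coprime.2 hpq).symm
      exact hcop.dvd_of_dvd_mul_right ⟨G n - G m - 1, by rw [heq]; ring⟩
    obtain ⟨c, hcq⟩ := hdvd
    have hc1 : c ≤ 1 := by nlinarith
    have hc2 : -1 ≤ c := by nlinarith
    have hGc : c * p = G n - G m - 1 := by
      have : (c * p) * (q : ℤ) = (G n - G m - 1) * q := by rw [← heq, hcq]; ring
      exact mul_right_cancel₀ hqz.ne' this
    have hG' : G (q + 1) = G 1 + p := hG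
    have : c = -1 ∨ c = 0 ∨ c = 1 := by omega
    rcases this with rfl | rfl | rfl
    · have a : n = 1 := by omega
      have b : m = q + 1 := by omega
      subst a b
      omega
    · have a : n = m := by omega
      subst a
      omega
    · have a : n = q + 1 := by omega
      have b : m = 1 := by omega
      subst a b
      omega
  have hne : (Finset.Icc (1 : ℤ) (q + 1)).Nonempty := ⟨1, by simp⟩
  obtain ⟨m, hm, hmax⟩ := Finset.exists_max_image _ (fun n => G n * q - n * p) hne
  rw [Finset.mem_Icc] at hm
  refine ⟨G m * q - m * p, fun n h1 h2 => ?_⟩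
  have ha := hmax n (Finset.mem_Icc.2 ⟨h1, h2⟩)
  have hb := key m n hm.1 hm.2 h1 h2
  symm
  change _ = G n
  rw [Int.ediv_eq_iff_of_pos hqz]
  constructor <;> linarith

lemma trace_eq_WW (θ lam E : ℝ) (k : ℕ)
    (hG : ⌊((Nat.fib (k + 2) + 1 : ℤ) : ℝ) * goldenOmega + θ⌋
      = ⌊((1 : ℤ) : ℝ) * goldenOmega + θ⌋ + Nat.fib (k + 1)) :
    xTrace lam θ k E
      = Matrix.trace (PP lam E (WW (Nat.fib (k + 1)) (Nat.fib (k + 2)) 0) (Nat.fib (k + 2))) := by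
  have hq : 0 < Nat.fib (k + 2) := Nat.fib_pos.2 (by omega)
  have hpq : Nat.Coprime (Nat.fib (k + 1)) (Nat.fib (k + 2)) := Nat.fib_coprime_fib_succ _
  have hu := fib_unit (k + 2)
  have hd := fib_delta k
  have ho := om_lb
  have hpow : 0 < goldenOmega ^ (k + 2) := by positivity
  have hmono : (Nat.fib (k + 2) : ℝ) ≤ Nat.fib (k + 2 + 1) := by
    exact_mod_cast Nat.fib_le_fib_succ
  have hqr : (0 : ℝ) < Nat.fib (k + 2) := by exact_mod_cast hq
  have hlt : (Nat.fib (k + 2) : ℝ) * goldenOmega ^ (k + 2) < 1 := by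
    have h2 : 0 < goldenOmega * (Nat.fib (k + 2) : ℝ) := by positivity
    nlinarith
  have hpos : 0 < (Nat.fib (k + 2) : ℝ) * goldenOmega ^ (k + 2) := by positivity
  obtain ⟨j, hj⟩ := exists_j θ _ _ hq hpq
    (by
      rw [hd]
      rcases neg_one_pow_eq_or ℝ (k + 1) with h | h <;> rw [h] <;> linarith)
    (by
      rw [hd]
      rcases neg_one_pow_eq_or ℝ (k + 1) with h | h <;> rw [h] <;> linarith) hG
  unfold xTrace
  rw [Mmat_eq_PP, PP_congr lam E (vTheta θ) (WW (Nat.fib (k + 1)) (Nat.fib (k + 2)) j)]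
  · exact WW_trace_const lam E _ _ hq hpq _ _
  · intro m h1 h2
    rw [vTheta_eq, hj m h1 (by omega), hj (m + 1) (by omega) (by omega), WW]

/-- The no-carry condition, in terms of the fractional part. -/
lemma floor_cond (θ : ℝ) (k : ℕ)
    (h1 : 0 ≤ Int.fract (((1 : ℤ) : ℝ) * goldenOmega + θ) + (-1) ^ (k + 1) * goldenOmega ^ (k + 2))
    (h2 : Int.fract (((1 : ℤ) : ℝ) * goldenOmega + θ) + (-1) ^ (k + 1) * goldenOmega ^ (k + 2) < 1) :
    ⌊((Nat.fib (k + 2) + 1 : ℤ) : ℝ) * goldenOmega + θ⌋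
      = ⌊((1 : ℤ) : ℝ) * goldenOmega + θ⌋ + Nat.fib (k + 1) := by
  have hd := fib_delta k
  have hf := Int.floor_add_fract (((1 : ℤ) : ℝ) * goldenOmega + θ)
  rw [Int.floor_eq_iff]
  push_cast at *
  constructor <;> linarith

lemma pow_bd (k : ℕ) : 0 < goldenOmega ^ (k + 2) ∧ goldenOmega ^ (k + 2) ≤ 1 - goldenOmega := by
  have ho := om_lb
  refine ⟨by positivity, ?_⟩
  rw [← om_sq]
  exact pow_le_pow_of_le_one (by linarith) om_ub.le (by omega)

lemma fract_zero : Int.fract (((1 : ℤ) : ℝ) * goldenOmega + 0) = goldenOmega := by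
  have := om_lb
  rw [Int.fract_eq_iff]
  exact ⟨by linarith, om_ub, 0, by simp⟩

lemma base_cond (k : ℕ) :
    ⌊((Nat.fib (k + 2) + 1 : ℤ) : ℝ) * goldenOmega + 0⌋
      = ⌊((1 : ℤ) : ℝ) * goldenOmega + 0⌋ + Nat.fib (k + 1) := by
  have ho := om_lb
  have ho1 := om_ub
  obtain ⟨a, b⟩ := pow_bd k
  rcases Nat.even_or_odd k with h | h
  · apply floor_cond <;> rw [fract_zero, (Even.add_one h).neg_one_pow] <;> linarith
  · have h1 : 1 ≤ k := h.pos
    obtain ⟨l, rfl⟩ : ∃ l, k = l + 1 := ⟨k - 1, by omega⟩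
    obtain ⟨c, d⟩ := pow_bd l
    have e : goldenOmega ^ (l + 1 + 2) = goldenOmega ^ (l + 2) * goldenOmega := by ring
    apply floor_cond <;> rw [fract_zero, (Odd.add_one h).neg_one_pow]
    · linarith
    · rw [e]; nlinarith

lemma trace_fun_eq (lam θ : ℝ) (k : ℕ)
    (hG : ⌊((Nat.fib (k + 2) + 1 : ℤ) : ℝ) * goldenOmega + θ⌋
      = ⌊((1 : ℤ) : ℝ) * goldenOmega + θ⌋ + Nat.fib (k + 1)) :
    xTrace lam θ k = xTrace lam 0 k := by
  funext E
  rw [trace_eq_WW θ lam E k hG, trace_eq_WW 0 lam E k (base_cond k)]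

/-- For every `λ > 0` and every `θ`, either for all odd `k ≥ 1` and all `E ∈ ℝ` we have
`(∂/∂E) x_k(E, λ, θ) = (∂/∂E) x_k(E, λ, 0)`, or for all even `k ≥ 0` and all `E ∈ ℝ` we
have `(∂/∂E) x_k(E, λ, θ) = (∂/∂E) x_k(E, λ, 0)`. -/
theorem xTrace_deriv_phase_invariance (lam : ℝ) (hlam : 0 < lam) (θ : ℝ) :
    (∀ k, Odd k → ∀ E : ℝ, deriv (xTrace lam θ k) E = deriv (xTrace lam 0 k) E) ∨
    (∀ k, Even k → ∀ E : ℝ, deriv (xTrace lam θ k) E = deriv (xTrace lam 0 k) E) := by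
  have ho := om_lb
  have f0 := Int.fract_nonneg (((1 : ℤ) : ℝ) * goldenOmega + θ)
  have f1 := Int.fract_lt_one (((1 : ℤ) : ℝ) * goldenOmega + θ)
  rcases lt_or_ge (Int.fract (((1 : ℤ) : ℝ) * goldenOmega + θ)) (1 - goldenOmega) with h | h
  · left
    intro k hk E
    obtain ⟨a, b⟩ := pow_bd k
    rw [trace_fun_eq lam θ k]
    apply floor_cond <;> rw [(Odd.add_one hk).neg_one_pow] <;> linarith
  · right
    intro k hk E
    obtain ⟨a, b⟩ := pow_bd k
    rw [trace_fun_eq lam θ k]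
    apply floor_cond <;> rw [(Even.add_one hk).neg_one_pow] <;> linarith
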